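/- Let 1 ≤ N ≤ m and, for j = 1, …, m, let w_j ≥ 0, b_j ≥ 0, c_j ≥ 0 be real numbers with ∑_{j=1}^N w_j·c_j > 0. Let p > 0, q > 0 and q' < 0 be real numbers such that q·b_j − p·c_j ≥ 0 for all j ≤ N and p·c_j − q·b_j ≥ 0 for all j > N. If ∑_{j=1}^m w_j·|p·c_j − q·b_j| = ∑_{j=1}^m w_j·|p·c_j − q'·b_j|, then q + q' > 0. -/

import Mathlib

/-!
For fixed `p > 0`, the seminorm of `p / q` does not decrease as `q` runs down through the
non-positive numbers, because the slopes `b j / c j` are non-negative. Reflecting `q > 0` to `-q`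
turns each `|p * c j - q * b j|` into `p * c j + q * b j`, which strictly increases the seminorm as
soon as one slope of positive weight is neither `0` nor `∞`. So `q' ≤ -q` would force the seminorm
of `p / q'` to exceed that of `p / q`. Such a slope exists among the first `N`: some `w j * c j` is
positive there, and `p * c j ≤ q * b j` then makes `b j` positive too.
-/

section SlopeSeminorm

variable {ι R : Type*} [CommRing R] [LinearOrder R] {s : Finset ι} {w b c : ι → R} {p q q' : R}

/-- The total Culler–Shalen seminorm of the slope `p / q`, for boundary slopes `b j / c j` with
weights `w j`. Slopes are given by numerator and denominator, so that `1 / 0` is allowed. -/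
def slopeSeminorm (s : Finset ι) (w b c : ι → R) (p q : R) : R :=
  ∑ j ∈ s, w j * |p * c j - q * b j|

variable [IsStrictOrderedRing R]

theorem slopeSeminorm_of_nonpos (hb : ∀ j ∈ s, 0 ≤ b j) (hc : ∀ j ∈ s, 0 ≤ c j) (hp : 0 ≤ p)
    (hq : q ≤ 0) : slopeSeminorm s w b c p q = ∑ j ∈ s, w j * (p * c j - q * b j) := by
  refine Finset.sum_congr rfl fun j hj => ?_
  have hqb : q * b j ≤ 0 := mul_nonpos_of_nonpos_of_nonneg hq (hb j hj)
  rw [abs_of_nonneg (sub_nonneg.2 (hqb.trans (mul_nonneg hp (hc j hj))))]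

theorem antitoneOn_slopeSeminorm (hw : ∀ j ∈ s, 0 ≤ w j) (hb : ∀ j ∈ s, 0 ≤ b j)
    (hc : ∀ j ∈ s, 0 ≤ c j) (hp : 0 ≤ p) :
    AntitoneOn (slopeSeminorm s w b c p) (Set.Iic 0) := by
  intro x hx y hy hxy
  rw [slopeSeminorm_of_nonpos hb hc hp hx, slopeSeminorm_of_nonpos hb hc hp hy]
  gcongr with j hj
  exacts [hw j hj, hb j hj]

theorem slopeSeminorm_lt_slopeSeminorm_neg (hw : ∀ j ∈ s, 0 ≤ w j) (hb : ∀ j ∈ s, 0 ≤ b j)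
    (hc : ∀ j ∈ s, 0 ≤ c j) (hpos : ∃ k ∈ s, 0 < w k ∧ 0 < b k ∧ 0 < c k) (hp : 0 < p)
    (hq : 0 < q) : slopeSeminorm s w b c p q < slopeSeminorm s w b c p (-q) := by
  obtain ⟨k, hk, hwk, hbk, hck⟩ := hpos
  rw [slopeSeminorm_of_nonpos hb hc hp.le (neg_nonpos.2 hq.le)]
  simp only [neg_mul, sub_neg_eq_add]
  refine Finset.sum_lt_sum (fun j hj => mul_le_mul_of_nonneg_left ?_ (hw j hj))
    ⟨k, hk, mul_lt_mul_of_pos_left ?_ hwk⟩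
  · have hpc : 0 ≤ p * c j := mul_nonneg hp.le (hc j hj)
    have hqb : 0 ≤ q * b j := mul_nonneg hq.le (hb j hj)
    exact abs_sub_le_of_nonneg_of_le hpc (le_add_of_nonneg_right hqb) hqb
      (le_add_of_nonneg_left hpc)
  · have hpc : 0 < p * c k := mul_pos hp hck
    have hqb : 0 < q * b k := mul_pos hq hbk
    exact abs_sub_lt_of_nonneg_of_lt hpc.le (lt_add_of_pos_right _ hqb) hqb.le
      (lt_add_of_pos_left _ hpc)

theorem exists_pos_of_sum_mul_pos_of_mul_le_mul (hw : ∀ j ∈ s, 0 ≤ w j)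
    (hwc : 0 < ∑ j ∈ s, w j * c j) (hp : 0 < p) (hq : 0 ≤ q)
    (hle : ∀ j ∈ s, p * c j ≤ q * b j) : ∃ k ∈ s, 0 < w k ∧ 0 < b k ∧ 0 < c k := by
  obtain ⟨k, hk, hwck⟩ : ∃ k ∈ s, 0 < w k * c k :=
    Finset.exists_lt_of_sum_lt (by simpa only [Finset.sum_const_zero] using hwc)
  have hck : 0 < c k := pos_of_mul_pos_right hwck (hw k hk)
  have hqbk : 0 < q * b k := (mul_pos hp hck).trans_le (hle k hk)
  exact ⟨k, hk, pos_of_mul_pos_left hwck hck.le, pos_of_mul_pos_right hqbk hq, hck⟩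

theorem stmt_9_general (hw : ∀ j ∈ s, 0 ≤ w j) (hb : ∀ j ∈ s, 0 ≤ b j) (hc : ∀ j ∈ s, 0 ≤ c j)
    (hpos : ∃ k ∈ s, 0 < w k ∧ 0 < b k ∧ 0 < c k) (hp : 0 < p) (hq : 0 < q)
    (heq : slopeSeminorm s w b c p q = slopeSeminorm s w b c p q') : 0 < q + q' := by
  by_contra! hqq'
  have hq'_le : q' ≤ -q := le_neg_iff_add_nonpos_left.2 hqq'
  have hneg : -q ≤ 0 := neg_nonpos.2 hq.le
  refine heq.not_lt ?_
  calc slopeSeminorm s w b c p q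
      < slopeSeminorm s w b c p (-q) := slopeSeminorm_lt_slopeSeminorm_neg hw hb hc hpos hp hq
    _ ≤ slopeSeminorm s w b c p q' :=
      antitoneOn_slopeSeminorm hw hb hc hp.le (hq'_le.trans hneg) hneg hq'_le

end SlopeSeminorm

theorem stmt_9 (m N : ℕ) (hN : 1 ≤ N) (hNm : N ≤ m) (w b c : ℕ → ℝ)
    (hw : ∀ j ∈ Finset.Icc 1 m, 0 ≤ w j)
    (hb : ∀ j ∈ Finset.Icc 1 m, 0 ≤ b j)
    (hc : ∀ j ∈ Finset.Icc 1 m, 0 ≤ c j)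
    (hpos : 0 < ∑ j ∈ Finset.Icc 1 N, w j * c j)
    (p q q' : ℝ) (hp : 0 < p) (hq : 0 < q) (hq' : q' < 0)
    (h1 : ∀ j ∈ Finset.Icc 1 N, 0 ≤ q * b j - p * c j)
    (h2 : ∀ j ∈ Finset.Icc (N + 1) m, 0 ≤ p * c j - q * b j)
    (heq : ∑ j ∈ Finset.Icc 1 m, w j * |p * c j - q * b j| =
           ∑ j ∈ Finset.Icc 1 m, w j * |p * c j - q' * b j|) :
    0 < q + q' := by
  have hsub : Finset.Icc 1 N ⊆ Finset.Icc 1 m := Finset.Icc_subset_Icc_right hNm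
  obtain ⟨k, hk, hwbc⟩ := exists_pos_of_sum_mul_pos_of_mul_le_mul (fun j hj => hw j (hsub hj))
    hpos hp hq.le fun j hj => sub_nonneg.1 (h1 j hj)
  exact stmt_9_general hw hb hc ⟨k, hsub hk, hwbc⟩ hp hq heq
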